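/- Let Ω ⊆ ℝⁿ (n ≥ 1) be a bounded open set and s > 0 with n + 2s > 2. Let P = (p_{ik}) be a real orthogonal n × n matrix and define x̄_i := Σ_{k=1}^{n} p_{ik} x_k, where x_1, …, x_n are the standard coordinate functions on ℝⁿ. Then for every smooth real-valued function u₁ compactly supported in Ω, Σ_{i=1}^{n} ∫_Ω ½[ 2x̄_i · (-Δ)^s|_Ω(x̄_i u₁) − x̄_i² · (-Δ)^s|_Ω u₁ − (-Δ)^s|_Ω(x̄_i² u₁) ] · u₁ dx = s(n + 2s − 2) ∫_{ℝⁿ} |y|^{2(s−1)} |F[u₁](y)|² dy. -/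

import Mathlib

/-!
Work on the Fourier side. For a real function `u` vanishing off `Ω`, Parseval
(`integral_fracLap_mul`) turns `∫ ((-Δ)^s|_Ω f) h` into `∫ |y|^{2s} Re (conj ĥ f̂)`. Multiplication
of `u` by a coordinate `⟪x, p⟫` becomes `i ∂_p` on `û`, so the three terms for that coordinate
become `|∂_p û|²` and twice `½ Re (conj û ∂_p² û)`, which add up to `½ ∂_p² |û|²`:

`∫ Θ₂(⟪x, p⟫) u = ½ ∫ |y|^{2s} ∂_p² |û|² dy`   (`setIntegral_theta2`).

Summing over an orthonormal frame `p` produces the Laplacian of `|û|²`, whichever frame is taken;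
this is the rotation invariance. Two integrations by parts and
`Δ |y|^{2s} = 2s(n + 2s - 2) |y|^{2s-2}` give the result (`integral_norm_rpow_mul_laplacian`).

The weight `|y|^{2s}` need not be smooth at the origin, so the integrations by parts are carried
out with `(ε + |y|²)^s`, which has temperate growth (`integral_regWeight_mul_laplacian`), and then
`ε → 0` by dominated convergence (`tendsto_integral_regWeight_mul`). The domination needs
`|y|^{2s-2}` to be locally integrable, which is the condition `n + 2s > 2`.

Mathlib's transform `𝓕` has kernel `e^{-2πi⟨x,ξ⟩}`; the substitution `y = 2πξ` accounts for the
powers of `2π` in the lemmas below.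
-/

open MeasureTheory Real Complex
open scoped RealInnerProductSpace

/-- The unitary Fourier transform on `ℝⁿ`:
`F[u](y) = (2π)^{-n/2} ∫ e^{-i⟨x,y⟩} u(x) dx`. -/
noncomputable def fourierT (n : ℕ) (u : EuclideanSpace ℝ (Fin n) → ℂ)
    (y : EuclideanSpace ℝ (Fin n)) : ℂ :=
  (((2 * Real.pi) ^ (-(n : ℝ) / 2) : ℝ) : ℂ) *
    ∫ x : EuclideanSpace ℝ (Fin n), Complex.exp (-(Complex.I * ((⟪x, y⟫ : ℝ) : ℂ))) * u x

/-- The inverse unitary Fourier transform on `ℝⁿ`: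
`F⁻¹[w](x) = (2π)^{-n/2} ∫ e^{i⟨x,y⟩} w(y) dy`. -/
noncomputable def invFourierT (n : ℕ) (w : EuclideanSpace ℝ (Fin n) → ℂ)
    (x : EuclideanSpace ℝ (Fin n)) : ℂ :=
  (((2 * Real.pi) ^ (-(n : ℝ) / 2) : ℝ) : ℂ) *
    ∫ y : EuclideanSpace ℝ (Fin n), Complex.exp (Complex.I * ((⟪x, y⟫ : ℝ) : ℂ)) * w y

/-- The fractional Laplacian restricted to `Ω`:
`((-Δ)^s|_Ω f)(x) = F⁻¹[y ↦ |y|^{2s} F[f·χ_Ω](y)](x)` (real part; the expression is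
real-valued for real `f`). -/
noncomputable def fracLap {n : ℕ} (s : ℝ) (Ω : Set (EuclideanSpace ℝ (Fin n)))
    (f : EuclideanSpace ℝ (Fin n) → ℝ) (x : EuclideanSpace ℝ (Fin n)) : ℝ :=
  (invFourierT n (fun y => ((‖y‖ ^ (2 * s) : ℝ) : ℂ) *
      fourierT n (fun z => ((Ω.indicator f z : ℝ) : ℂ)) y) x).re


open scoped LineDeriv SchwartzMap FourierTransform
open Filter Topology

/-! ### The weights `(ε + ‖y‖²)^r` and `‖y‖^a` -/

lemma hasTemperateGrowth_regWeight {n : ℕ} {ε : ℝ} (hε : 0 < ε) (r : ℝ) :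
    (fun y : EuclideanSpace ℝ (Fin n) => (ε + ‖y‖ ^ 2) ^ r).HasTemperateGrowth := by
  -- scaling reduces this to the Japanese bracket `(1 + ‖y‖²)^r`
  have h : (fun y : EuclideanSpace ℝ (Fin n) => (ε + ‖y‖ ^ 2) ^ r)
      = fun y => ε ^ r * (1 + ‖(Real.sqrt ε)⁻¹ • y‖ ^ 2) ^ r := by
    ext y
    rw [← Real.mul_rpow hε.le (by positivity), norm_smul, mul_pow, Real.norm_eq_abs, sq_abs,
      inv_pow, Real.sq_sqrt hε.le]
    congr 1
    field_simp
  rw [h]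
  exact (Function.HasTemperateGrowth.const _).mul
    ((Function.hasTemperateGrowth_one_add_norm_sq_rpow (EuclideanSpace ℝ (Fin n)) r).comp
      ((Real.sqrt ε)⁻¹ • ContinuousLinearMap.id ℝ
        (EuclideanSpace ℝ (Fin n))).hasTemperateGrowth)

lemma hasFDerivAt_regWeight {n : ℕ} {ε : ℝ} (hε : 0 < ε) (r : ℝ)
    (y : EuclideanSpace ℝ (Fin n)) :
    HasFDerivAt (fun y : EuclideanSpace ℝ (Fin n) => (ε + ‖y‖ ^ 2) ^ r)
      ((r * (ε + ‖y‖ ^ 2) ^ (r - 1)) • ((2 : ℝ) • innerSL ℝ y)) y := by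
  have h : HasFDerivAt (fun y : EuclideanSpace ℝ (Fin n) => ε + ‖y‖ ^ 2)
      ((2 : ℝ) • innerSL ℝ y) y := by
    have := ((hasStrictFDerivAt_norm_sq y).hasFDerivAt).const_add ε
    exact this.congr_fderiv (by ext; simp)
  exact h.rpow_const (Or.inl (by positivity))

lemma hasLineDerivAt_regWeight {n : ℕ} {ε : ℝ} (hε : 0 < ε) (r : ℝ)
    (y p : EuclideanSpace ℝ (Fin n)) :
    HasLineDerivAt ℝ (fun y : EuclideanSpace ℝ (Fin n) => (ε + ‖y‖ ^ 2) ^ r)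
      (2 * r * ⟪p, y⟫ * (ε + ‖y‖ ^ 2) ^ (r - 1)) y p := by
  have h := (hasFDerivAt_regWeight hε r y).hasLineDerivAt p
  simp only [smul_apply, smul_eq_mul, innerSL_apply_apply, real_inner_comm p y] at h
  rw [show 2 * r * ⟪p, y⟫ * (ε + ‖y‖ ^ 2) ^ (r - 1)
    = r * (ε + ‖y‖ ^ 2) ^ (r - 1) * (2 * ⟪p, y⟫) by ring]
  exact h

lemma hasLineDerivAt_inner_mul_regWeight {n : ℕ} {ε : ℝ} (hε : 0 < ε) (r : ℝ)
    (y p : EuclideanSpace ℝ (Fin n)) :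
    HasLineDerivAt ℝ (fun y : EuclideanSpace ℝ (Fin n) => 2 * r * ⟪p, y⟫ * (ε + ‖y‖ ^ 2) ^ (r - 1))
      (2 * r * ‖p‖ ^ 2 * (ε + ‖y‖ ^ 2) ^ (r - 1)
        + 4 * r * (r - 1) * ⟪p, y⟫ ^ 2 * (ε + ‖y‖ ^ 2) ^ (r - 2)) y p := by
  have h1 : HasFDerivAt (fun y : EuclideanSpace ℝ (Fin n) => 2 * r * ⟪p, y⟫)
      ((2 * r) • innerSL ℝ p) y := ((innerSL ℝ p).hasFDerivAt).const_mul (2 * r)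
  have h := (h1.mul (hasFDerivAt_regWeight hε (r - 1) y)).hasLineDerivAt p
  simp only [add_apply, smul_apply, smul_eq_mul, innerSL_apply_apply,
    real_inner_self_eq_norm_sq, real_inner_comm p y, show r - 1 - 1 = r - 2 by ring] at h
  rw [show 2 * r * ‖p‖ ^ 2 * (ε + ‖y‖ ^ 2) ^ (r - 1)
        + 4 * r * (r - 1) * ⟪p, y⟫ ^ 2 * (ε + ‖y‖ ^ 2) ^ (r - 2)
      = 2 * r * ⟪p, y⟫ * ((r - 1) * (ε + ‖y‖ ^ 2) ^ (r - 2) * (2 * ⟪p, y⟫))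
        + (ε + ‖y‖ ^ 2) ^ (r - 1) * (2 * r * ‖p‖ ^ 2) by ring]
  exact h

/-- A temperate function times a Schwartz function is integrable. -/
lemma integrable_temperate_mul {n : ℕ} {f : EuclideanSpace ℝ (Fin n) → ℝ}
    (hf : f.HasTemperateGrowth) (G : 𝓢(EuclideanSpace ℝ (Fin n), ℝ)) :
    Integrable (fun y => f y * G y) := by
  have := (SchwartzMap.smulLeftCLM ℝ f G).integrable (μ := volume)
  refine this.congr (Eventually.of_forall fun y => ?_)
  simp [SchwartzMap.smulLeftCLM_apply_apply hf]

/-- Integration by parts of a temperate function against a Schwartz function. -/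
lemma integral_temperate_mul_lineDeriv {n : ℕ} {f f' : EuclideanSpace ℝ (Fin n) → ℝ}
    (hf : f.HasTemperateGrowth) (hf' : f'.HasTemperateGrowth)
    (p : EuclideanSpace ℝ (Fin n)) (h : ∀ y, HasLineDerivAt ℝ f (f' y) y p)
    (G : 𝓢(EuclideanSpace ℝ (Fin n), ℝ)) :
    ∫ y, f y * (∂_{p} G) y = -∫ y, f' y * G y := by
  refine integral_bilinear_hasLineDerivAt_right_eq_neg_left_of_integrable
    (B := ContinuousLinearMap.mul ℝ ℝ) (v := p) (integrable_temperate_mul hf' G)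
    (integrable_temperate_mul hf (∂_{p} G)) (integrable_temperate_mul hf G)
    (fun y _ => h y) (fun y _ => ?_)
  rw [SchwartzMap.lineDerivOp_apply_eq_fderiv]
  exact G.differentiableAt.hasFDerivAt.hasLineDerivAt p

lemma integral_regWeight_mul_lineDeriv_lineDeriv {n : ℕ} {ε : ℝ} (hε : 0 < ε) (s : ℝ)
    (p : EuclideanSpace ℝ (Fin n)) (G : 𝓢(EuclideanSpace ℝ (Fin n), ℝ)) :
    ∫ y, (ε + ‖y‖ ^ 2) ^ s * (∂_{p} (∂_{p} G)) y
      = ∫ y, (2 * s * ‖p‖ ^ 2 * (ε + ‖y‖ ^ 2) ^ (s - 1)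
          + 4 * s * (s - 1) * ⟪p, y⟫ ^ 2 * (ε + ‖y‖ ^ 2) ^ (s - 2)) * G y := by
  have t (r : ℝ) := hasTemperateGrowth_regWeight (n := n) hε r
  have t1 := t (s - 1)
  have t2 := t (s - 2)
  rw [integral_temperate_mul_lineDeriv (t s) (by fun_prop) p
    (fun y => hasLineDerivAt_regWeight hε s y p),
    integral_temperate_mul_lineDeriv (by fun_prop) (by fun_prop) p
    (fun y => hasLineDerivAt_inner_mul_regWeight hε s y p), neg_neg]

/-- Two integrations by parts in each direction of the frame `p`; the hypotheses `hp1`, `hp2` are the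
form in which its orthonormality enters the Laplacian of the radial weight. -/
lemma integral_regWeight_mul_laplacian {n : ℕ} {ε : ℝ} (hε : 0 < ε) (s : ℝ)
    (p : Fin n → EuclideanSpace ℝ (Fin n)) (hp1 : ∀ i, ‖p i‖ = 1)
    (hp2 : ∀ y, ∑ i, ⟪p i, y⟫ ^ 2 = ‖y‖ ^ 2) (G : 𝓢(EuclideanSpace ℝ (Fin n), ℝ)) :
    ∫ y, (ε + ‖y‖ ^ 2) ^ s * ∑ i, (∂_{p i} (∂_{p i} G)) y
      = ∫ y, (2 * s * n * (ε + ‖y‖ ^ 2) ^ (s - 1)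
          + 4 * s * (s - 1) * ‖y‖ ^ 2 * (ε + ‖y‖ ^ 2) ^ (s - 2)) * G y := by
  have t (r : ℝ) := hasTemperateGrowth_regWeight (n := n) hε r
  have t1 := t (s - 1)
  have t2 := t (s - 2)
  simp_rw [Finset.mul_sum]
  rw [integral_finsetSum _ fun i _ => integrable_temperate_mul (t s) _]
  simp_rw [integral_regWeight_mul_lineDeriv_lineDeriv hε s]
  rw [← integral_finsetSum _ fun i _ => integrable_temperate_mul (by fun_prop) _]
  congr 1 with y
  rw [← Finset.sum_mul, Finset.sum_add_distrib, ← hp2 y]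
  simp [hp1, Finset.mul_sum, Finset.sum_mul]
  left; ring

lemma integrable_norm_rpow_mul {n : ℕ} (hn : 1 ≤ n) {a : ℝ} (ha : -(n : ℝ) < a)
    (G : 𝓢(EuclideanSpace ℝ (Fin n), ℝ)) :
    Integrable (fun y => ‖y‖ ^ a * G y) := by
  have : Nonempty (Fin n) := ⟨⟨0, hn⟩⟩
  have hmeas : AEStronglyMeasurable
      (fun y : EuclideanSpace ℝ (Fin n) => ‖y‖ ^ a * G y) volume :=
    ((measurable_norm.pow_const a).aestronglyMeasurable).mul G.continuous.aestronglyMeasurable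
  -- near the origin the weight is integrable and `G` is bounded
  have hball : IntegrableOn (fun y : EuclideanSpace ℝ (Fin n) => ‖y‖ ^ a * G y)
      (Metric.ball 0 1) := by
    have hw : IntegrableOn (fun y : EuclideanSpace ℝ (Fin n) => ‖y‖ ^ a) (Metric.ball 0 1) := by
      rw [integrableOn_fun_norm_addHaar volume (f := fun t : ℝ => t ^ a)]
      have h := (intervalIntegral.integrableOn_Ioo_rpow_iff (s := a + (n - 1 : ℕ))
        (t := 1) one_pos).2 (by push_cast [hn]; linarith)
      refine h.congr_fun (fun t ht => ?_) measurableSet_Ioo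
      simp only [finrank_euclideanSpace, Fintype.card_fin, smul_eq_mul]
      rw [Real.rpow_add ht.1, Real.rpow_natCast, mul_comm]
    exact Integrable.mul_bdd (c := ‖G.toBoundedContinuousFunction‖) hw
      G.continuous.aestronglyMeasurable
      (Eventually.of_forall fun y => G.toBoundedContinuousFunction.norm_coe_le_norm y)
  -- away from it the weight is at most `(1 + ‖y‖²)^|a|`
  have hout : IntegrableOn (fun y : EuclideanSpace ℝ (Fin n) => ‖y‖ ^ a * G y)
      (Metric.ball 0 1)ᶜ := by
    have h := (integrable_temperate_mul
      (hasTemperateGrowth_regWeight (n := n) one_pos |a|) G).integrableOn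
        (s := (Metric.ball (0 : EuclideanSpace ℝ (Fin n)) 1)ᶜ)
    refine Integrable.mono h hmeas.restrict ?_
    filter_upwards [ae_restrict_mem Metric.isOpen_ball.measurableSet.compl] with y hy
    have hy1 : 1 ≤ ‖y‖ := by simpa using hy
    rw [norm_mul, norm_mul]
    gcongr
    rw [Real.norm_of_nonneg (by positivity), Real.norm_of_nonneg (by positivity)]
    calc ‖y‖ ^ a ≤ ‖y‖ ^ |a| := Real.rpow_le_rpow_of_exponent_le hy1 (le_abs_self a)
      _ ≤ (1 + ‖y‖ ^ 2) ^ |a| := by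
        apply Real.rpow_le_rpow (by positivity) _ (abs_nonneg a)
        nlinarith
  simpa using hball.union hout

/-- For every real exponent the regularised weights with `0 < ε ≤ 1` are bounded by the sum of
the two extreme ones, so that one dominating function covers both signs of `r`. -/
lemma regWeight_le {t ε : ℝ} (ht : 0 < t) (hε : 0 < ε) (hε1 : ε ≤ 1) (r : ℝ) :
    (ε + t ^ 2) ^ r ≤ t ^ (2 * r) + (1 + t ^ 2) ^ r := by
  have e : t ^ (2 * r) = (t ^ 2) ^ r := by
    rw [Real.rpow_mul ht.le]; norm_num
  rw [e]
  rcases le_total 0 r with hr | hr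
  · have : (ε + t ^ 2) ^ r ≤ (1 + t ^ 2) ^ r :=
      Real.rpow_le_rpow (by positivity) (by linarith) hr
    have : 0 ≤ (t ^ 2) ^ r := by positivity
    linarith
  · have : (ε + t ^ 2) ^ r ≤ (t ^ 2) ^ r :=
      Real.rpow_le_rpow_of_nonpos (by positivity) (by linarith) hr
    have : 0 ≤ (1 + t ^ 2) ^ r := by positivity
    linarith

lemma tendsto_regWeight {t : ℝ} (ht : 0 < t) (r : ℝ) :
    Tendsto (fun ε : ℝ => (ε + t ^ 2) ^ r) (𝓝[>] 0) (𝓝 (t ^ (2 * r))) := by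
  have e : t ^ (2 * r) = (0 + t ^ 2) ^ r := by
    rw [Real.rpow_mul ht.le]; norm_num
  rw [e]
  have : ContinuousAt (fun ε : ℝ => (ε + t ^ 2) ^ r) 0 :=
    (continuousAt_id.add continuousAt_const).rpow_const (Or.inl (by simp; positivity))
  exact this.tendsto.mono_left nhdsWithin_le_nhds

/-- Dominated convergence for the regularised weights, down to exponents `2r > -n`. The second
weight is the one produced by the Laplacian; its factor `‖y‖²` compensates the lower exponent, so
both are controlled by `(ε + ‖y‖²)^r` and have the same limit. -/
lemma tendsto_integral_regWeight_mul {n : ℕ} (hn : 1 ≤ n) {r : ℝ} (hr : -(n : ℝ) < 2 * r)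
    (c d : ℝ) (G : 𝓢(EuclideanSpace ℝ (Fin n), ℝ)) :
    Tendsto (fun ε : ℝ =>
        ∫ y, (c * (ε + ‖y‖ ^ 2) ^ r + d * ‖y‖ ^ 2 * (ε + ‖y‖ ^ 2) ^ (r - 1)) * G y) (𝓝[>] 0)
      (𝓝 ((c + d) * ∫ y, ‖y‖ ^ (2 * r) * G y)) := by
  have : Nonempty (Fin n) := ⟨⟨0, hn⟩⟩
  have hε : ∀ᶠ ε : ℝ in 𝓝[>] 0, 0 < ε ∧ ε ≤ 1 :=
    (eventually_mem_nhdsWithin).and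
      (nhdsWithin_le_nhds (eventually_le_nhds one_pos))
  have h0 : ∀ᵐ y : EuclideanSpace ℝ (Fin n), 0 < ‖y‖ := by
    filter_upwards [Measure.ae_ne volume (0 : EuclideanSpace ℝ (Fin n))] with y hy
    exact norm_pos_iff.2 hy
  rw [← integral_const_mul]
  refine tendsto_integral_filter_of_dominated_convergence
    (fun y => (|c| + |d|) * (‖‖y‖ ^ (2 * r) * G y‖ + ‖(1 + ‖y‖ ^ 2) ^ r * G y‖)) ?_ ?_ ?_ ?_
  · filter_upwards [hε] with ε hε
    have t1 := hasTemperateGrowth_regWeight (n := n) hε.1 r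
    have t2 := hasTemperateGrowth_regWeight (n := n) hε.1 (r - 1)
    exact (integrable_temperate_mul (by fun_prop) G).1
  · filter_upwards [hε] with ε hε
    filter_upwards [h0] with y hy
    have hpos : 0 < ε + ‖y‖ ^ 2 := by have := hε.1; positivity
    have hw := regWeight_le hy hε.1 hε.2 r
    have hw' : ‖y‖ ^ 2 * (ε + ‖y‖ ^ 2) ^ (r - 1) ≤ (ε + ‖y‖ ^ 2) ^ r := by
      rw [Real.rpow_sub_one hpos.ne', mul_div_assoc', div_le_iff₀ hpos, mul_comm]
      gcongr
      linarith [hε.1]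
    simp only [norm_mul, ← add_mul, ← mul_assoc]
    gcongr
    rw [Real.norm_of_nonneg (show (0 : ℝ) ≤ ‖y‖ ^ (2 * r) by positivity),
      Real.norm_of_nonneg (show (0 : ℝ) ≤ (1 + ‖y‖ ^ 2) ^ r by positivity)]
    calc ‖c * (ε + ‖y‖ ^ 2) ^ r + d * ‖y‖ ^ 2 * (ε + ‖y‖ ^ 2) ^ (r - 1)‖
        ≤ |c| * (ε + ‖y‖ ^ 2) ^ r + |d| * (‖y‖ ^ 2 * (ε + ‖y‖ ^ 2) ^ (r - 1)) := by
          refine (norm_add_le _ _).trans (le_of_eq ?_)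
          rw [mul_assoc d, norm_mul, norm_mul, Real.norm_eq_abs c, Real.norm_eq_abs d,
            Real.norm_of_nonneg (by positivity), Real.norm_of_nonneg (by positivity)]
      _ ≤ |c| * (ε + ‖y‖ ^ 2) ^ r + |d| * (ε + ‖y‖ ^ 2) ^ r := by gcongr
      _ = (|c| + |d|) * (ε + ‖y‖ ^ 2) ^ r := by ring
      _ ≤ _ := by gcongr
  · exact ((integrable_norm_rpow_mul hn hr G).norm.add
      (integrable_temperate_mul (hasTemperateGrowth_regWeight one_pos r) G).norm).const_mul _
  · filter_upwards [h0] with y hy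
    have h1 := (tendsto_regWeight hy r).const_mul c
    have h2 := (tendsto_regWeight hy (r - 1)).const_mul (d * ‖y‖ ^ 2)
    have e : ‖y‖ ^ 2 * ‖y‖ ^ (2 * (r - 1)) = ‖y‖ ^ (2 * r) := by
      rw [← Real.rpow_natCast, ← Real.rpow_add hy]
      congr 1
      push_cast
      ring
    have h3 := (h1.add h2).mul_const (G y)
    rwa [mul_assoc d, e, ← add_mul, mul_assoc] at h3

/-- The distributional identity `Δ ‖y‖^{2s} = 2s(n + 2s - 2) ‖y‖^{2s-2}` on `ℝⁿ`, with the
Laplacian expressed in an arbitrary orthonormal frame `p`. -/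
lemma integral_norm_rpow_mul_laplacian {n : ℕ} (hn : 1 ≤ n) {s : ℝ} (hns : 2 < (n : ℝ) + 2 * s)
    (p : Fin n → EuclideanSpace ℝ (Fin n)) (hp1 : ∀ i, ‖p i‖ = 1)
    (hp2 : ∀ y, ∑ i, ⟪p i, y⟫ ^ 2 = ‖y‖ ^ 2) (G : 𝓢(EuclideanSpace ℝ (Fin n), ℝ)) :
    ∫ y, ‖y‖ ^ (2 * s) * ∑ i, (∂_{p i} (∂_{p i} G)) y
      = 2 * s * (n + 2 * s - 2) * ∫ y, ‖y‖ ^ (2 * (s - 1)) * G y := by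
  have hn' : (1 : ℝ) ≤ n := by exact_mod_cast hn
  have hl := tendsto_integral_regWeight_mul hn (r := s) (by linarith) 1 0
    (∑ i, ∂_{p i} (∂_{p i} G))
  have hr := tendsto_integral_regWeight_mul hn (r := s - 1) (by linarith)
    (2 * s * n) (4 * s * (s - 1)) G
  simp only [sum_apply, one_mul, zero_mul, add_zero] at hl
  have := tendsto_nhds_unique (hl.congr' ?_) hr
  · rw [this]
    ring
  · filter_upwards [self_mem_nhdsWithin] with ε hε
    rw [integral_regWeight_mul_laplacian hε s p hp1 hp2, show s - 1 - 1 = s - 2 by ring]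

/-! ### The function `‖U‖²` for a Schwartz function `U` -/

/-- The pointwise real inner product `y ↦ Re (conj (A y) * B y)` of two Schwartz functions, as a
Schwartz function. -/
noncomputable def schwartzInner {n : ℕ} (A B : 𝓢(EuclideanSpace ℝ (Fin n), ℂ)) :
    𝓢(EuclideanSpace ℝ (Fin n), ℝ) :=
  SchwartzMap.bilinLeftCLM (𝕜 := ℝ) (innerSL ℝ (E := ℂ)) B.hasTemperateGrowth A

lemma schwartzInner_apply {n : ℕ} (A B : 𝓢(EuclideanSpace ℝ (Fin n), ℂ))
    (y : EuclideanSpace ℝ (Fin n)) : schwartzInner A B y = ⟪A y, B y⟫ := rfl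

lemma lineDeriv_schwartzInner {n : ℕ} (A B : 𝓢(EuclideanSpace ℝ (Fin n), ℂ))
    (p : EuclideanSpace ℝ (Fin n)) :
    ∂_{p} (schwartzInner A B) = schwartzInner (∂_{p} A) B + schwartzInner A (∂_{p} B) := by
  ext y
  simp only [SchwartzMap.lineDerivOp_apply_eq_fderiv, add_apply, schwartzInner_apply]
  have h := (A.differentiableAt (x := y)).hasFDerivAt.inner ℝ (B.differentiableAt (x := y)).hasFDerivAt
  have h' : HasFDerivAt (schwartzInner A B) _ y := h
  rw [h'.fderiv]
  simp [fderivInnerCLM_apply, add_comm]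

lemma lineDeriv_lineDeriv_schwartzInner_self {n : ℕ} (U : 𝓢(EuclideanSpace ℝ (Fin n), ℂ))
    (p y : EuclideanSpace ℝ (Fin n)) :
    (∂_{p} (∂_{p} (schwartzInner U U))) y
      = 2 * (‖(∂_{p} U) y‖ ^ 2 + ⟪U y, (∂_{p} (∂_{p} U)) y⟫) := by
  simp only [lineDeriv_schwartzInner, LineDeriv.lineDerivOp_add, add_apply,
    schwartzInner_apply, real_inner_self_eq_norm_sq, real_inner_comm (U y)]
  ring

/-! ### Normalisations of the Fourier transform -/

/-- The unitary transform is a rescaling of `𝓕`, whose kernel is `e^{-2πi⟨x,ξ⟩}`. -/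
lemma fourierT_eq {n : ℕ} (u : EuclideanSpace ℝ (Fin n) → ℂ) (y : EuclideanSpace ℝ (Fin n)) :
    fourierT n u y = (((2 * π) ^ (-(n : ℝ) / 2) : ℝ) : ℂ) * 𝓕 u ((2 * π)⁻¹ • y) := by
  rw [fourierT, Real.fourier_eq']
  congr 2 with x
  rw [inner_smul_right, smul_eq_mul]
  congr 2
  have : (π : ℂ) ≠ 0 := by exact_mod_cast Real.pi_ne_zero
  push_cast
  field_simp

lemma integral_comp_two_pi_smul {n : ℕ} {F : Type*} [NormedAddCommGroup F] [NormedSpace ℝ F]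
    (f : EuclideanSpace ℝ (Fin n) → F) :
    ∫ y, f y = (2 * π) ^ n • ∫ ξ, f ((2 * π) • ξ) := by
  have h2 : (0 : ℝ) < 2 * π := by positivity
  rw [Measure.integral_comp_smul, finrank_euclideanSpace, Fintype.card_fin, smul_smul,
    abs_of_pos (by positivity), mul_inv_cancel₀ (by positivity), one_smul]

/-- The two unitary constants `(2π)^{-n/2}` cancel the Jacobian of `y = 2πξ`. -/
lemma unitaryConst_sq (n : ℕ) :
    ((2 * π) ^ (-(n : ℝ) / 2)) * ((2 * π) ^ (-(n : ℝ) / 2)) * (2 * π) ^ n = (1 : ℝ) := by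
  have h2 : (0 : ℝ) < 2 * π := by positivity
  rw [← Real.rpow_add h2, ← Real.rpow_natCast, ← Real.rpow_add h2]
  ring_nf
  simp

lemma norm_two_pi_smul_rpow {n : ℕ} (ξ : EuclideanSpace ℝ (Fin n)) (a : ℝ) :
    ‖(2 * π) • ξ‖ ^ a = (2 * π) ^ a * ‖ξ‖ ^ a := by
  have h2 : (0 : ℝ) < 2 * π := by positivity
  rw [norm_smul, Real.norm_of_nonneg h2.le, Real.mul_rpow h2.le (norm_nonneg _)]

lemma fracLap_eq {n : ℕ} (s : ℝ) (Ω : Set (EuclideanSpace ℝ (Fin n)))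
    (f : EuclideanSpace ℝ (Fin n) → ℝ) (x : EuclideanSpace ℝ (Fin n)) :
    fracLap s Ω f x = (2 * π) ^ (2 * s) *
      (𝓕⁻ (fun ξ => ((‖ξ‖ ^ (2 * s) : ℝ) : ℂ) *
        𝓕 (fun z => ((Ω.indicator f z : ℝ) : ℂ)) ξ) x).re := by
  have hπ : (2 * π : ℝ) ≠ 0 := by positivity
  rw [fracLap, ← Complex.re_ofReal_mul]
  congr 1
  rw [invFourierT, integral_comp_two_pi_smul, Real.fourierInv_eq', ← integral_const_mul,
    Complex.real_smul, ← mul_assoc, ← integral_const_mul]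
  congr 1 with ξ
  rw [fourierT_eq, smul_smul, inv_mul_cancel₀ hπ, one_smul, norm_two_pi_smul_rpow,
    inner_smul_right, real_inner_comm x ξ, smul_eq_mul]
  have e : Complex.exp (Complex.I * ((2 * π * ⟪x, ξ⟫ : ℝ) : ℂ))
    = Complex.exp (((2 * π * ⟪x, ξ⟫ : ℝ) : ℂ) * Complex.I) := by rw [mul_comm]
  have k : (((2 * π) ^ (-(n : ℝ) / 2) : ℝ) : ℂ) * (((2 * π) ^ (-(n : ℝ) / 2) : ℝ) : ℂ)
      * (((2 * π) ^ n : ℝ) : ℂ) = 1 := by exact_mod_cast unitaryConst_sq n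
  rw [e]
  push_cast at k ⊢
  linear_combination (((2 * π) ^ (2 * s) : ℝ) : ℂ) * Complex.exp (2 * π * ⟪x, ξ⟫ * Complex.I)
    * ((‖ξ‖ ^ (2 * s) : ℝ) : ℂ) * 𝓕 (fun z => ((Ω.indicator f z : ℝ) : ℂ)) ξ * k

lemma integral_norm_rpow_mul_fourierT_sq {n : ℕ} (a : ℝ) (u : EuclideanSpace ℝ (Fin n) → ℂ) :
    ∫ y, ‖y‖ ^ a * ‖fourierT n u y‖ ^ 2 = (2 * π) ^ a * ∫ ξ, ‖ξ‖ ^ a * ‖𝓕 u ξ‖ ^ 2 := by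
  have hπ : (2 * π : ℝ) ≠ 0 := by positivity
  rw [integral_comp_two_pi_smul, smul_eq_mul, ← integral_const_mul, ← integral_const_mul]
  congr 1 with ξ
  rw [fourierT_eq, smul_smul, inv_mul_cancel₀ hπ, one_smul, norm_two_pi_smul_rpow, norm_mul,
    Complex.norm_real, Real.norm_of_nonneg (by positivity)]
  linear_combination (2 * π) ^ a * ‖ξ‖ ^ a * ‖𝓕 u ξ‖ ^ 2 * unitaryConst_sq n

/-! ### Parseval for the restricted fractional Laplacian -/

lemma integrable_symbol_mul {n : ℕ} {s : ℝ} (hs : 0 < s)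
    (V : 𝓢(EuclideanSpace ℝ (Fin n), ℂ)) :
    Integrable (fun ξ => ((‖ξ‖ ^ (2 * s) : ℝ) : ℂ) * V ξ) := by
  have hw : (fun y : EuclideanSpace ℝ (Fin n) => (1 + ‖y‖ ^ 2) ^ s).HasTemperateGrowth :=
    hasTemperateGrowth_regWeight one_pos s
  have h := (SchwartzMap.smulLeftCLM ℂ (fun y : EuclideanSpace ℝ (Fin n) => (1 + ‖y‖ ^ 2) ^ s)
    V).integrable (μ := volume)
  refine h.mono ?_ (Eventually.of_forall fun ξ => ?_)
  · exact (Complex.measurable_ofReal.comp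
      (measurable_norm.pow_const _)).aestronglyMeasurable.mul V.continuous.aestronglyMeasurable
  · rw [SchwartzMap.smulLeftCLM_apply_apply hw, norm_mul, norm_smul, Complex.norm_real]
    gcongr
    rw [Real.norm_of_nonneg (by positivity), Real.norm_of_nonneg (by positivity),
      Real.rpow_mul (norm_nonneg _), Real.rpow_two]
    gcongr
    linarith

/-- Parseval's identity for `∫ ((-Δ)^s|_Ω f) h`. It uses only the symmetry of the Fourier integral,
which holds for integrable functions: the symbol need not map Schwartz functions to Schwartz
functions, and no Fourier inversion is involved. -/
lemma integral_fracLap_mul {n : ℕ} {s : ℝ} (hs : 0 < s)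
    (Ω : Set (EuclideanSpace ℝ (Fin n))) (f h : EuclideanSpace ℝ (Fin n) → ℝ)
    (φ ψ : 𝓢(EuclideanSpace ℝ (Fin n), ℂ)) (hφ : ∀ z, φ z = ((Ω.indicator f z : ℝ) : ℂ))
    (hψ : ∀ z, ψ z = (h z : ℂ)) :
    Integrable (fun x => fracLap s Ω f x * h x) ∧
    ∫ x, fracLap s Ω f x * h x
      = (2 * π) ^ (2 * s) * ∫ ξ, ‖ξ‖ ^ (2 * s) * ⟪(𝓕 ψ) ξ, (𝓕 φ) ξ⟫ := by
  set W : EuclideanSpace ℝ (Fin n) → ℂ := fun ξ => ((‖ξ‖ ^ (2 * s) : ℝ) : ℂ) * (𝓕 φ) ξ with hW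
  have hWi : Integrable W := integrable_symbol_mul hs (𝓕 φ)
  have hfun : (fun z => ((Ω.indicator f z : ℝ) : ℂ)) = φ := by
    ext z; rw [hφ]
  have hfl (x) : fracLap s Ω f x * h x = (2 * π) ^ (2 * s) * (inner ℂ (ψ x) (𝓕⁻ W x)).re := by
    rw [fracLap_eq, hfun, hψ, RCLike.inner_apply, Complex.conj_ofReal, mul_comm _ (h x : ℂ),
      Complex.re_ofReal_mul, ← SchwartzMap.fourier_coe]
    ring
  have hcont : Continuous (𝓕⁻ W) :=
    VectorFourier.fourierIntegral_continuous (L := -innerₗ (EuclideanSpace ℝ (Fin n)))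
      Real.continuous_fourierChar (by simp only [LinearMap.neg_apply]; exact continuous_inner.neg)
      hWi
  have hbdd (x) : ‖𝓕⁻ W x‖ ≤ ∫ ξ, ‖W ξ‖ :=
    VectorFourier.norm_fourierIntegral_le_integral_norm _ _ _ _ _
  have hint : Integrable (fun x => inner ℂ (ψ x) (𝓕⁻ W x)) := by
    simp only [RCLike.inner_apply]
    refine Integrable.bdd_mul ?_ hcont.aestronglyMeasurable (Eventually.of_forall hbdd)
    exact (ContinuousLinearEquiv.integrable_comp_iff Complex.conjCLE).2 ψ.integrable
  have hint2 : Integrable (fun ξ => inner ℂ ((𝓕 ψ) ξ) (W ξ)) := by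
    simp only [RCLike.inner_apply]
    refine Integrable.mul_bdd (c := ‖(𝓕 ψ).toBoundedContinuousFunction‖) hWi
      (Complex.continuous_conj.comp (𝓕 ψ).continuous).aestronglyMeasurable
      (Eventually.of_forall fun ξ => ?_)
    simpa using (𝓕 ψ).toBoundedContinuousFunction.norm_coe_le_norm ξ
  have hpar : ∫ ξ, inner ℂ ((𝓕 ψ) ξ) (W ξ) = ∫ x, inner ℂ (ψ x) (𝓕⁻ W x) := by
    have := VectorFourier.integral_sesq_fourierIntegral_eq_neg_flip (innerSL ℂ (E := ℂ))
      (L := innerₗ (EuclideanSpace ℝ (Fin n)))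
      (μ := volume) (ν := volume) Real.continuous_fourierChar continuous_inner
      ψ.integrable hWi
    simpa using! this
  refine ⟨?_, ?_⟩
  · simp_rw [hfl]
    exact (hint.re).const_mul _
  · simp_rw [hfl]
    rw [integral_const_mul]
    congr 1
    have h1 := integral_re hint
    have h2 := integral_re hint2
    simp only [RCLike.re_to_complex] at h1 h2
    rw [h1, ← hpar, ← h2]
    congr 1 with ξ
    simp only [hW, RCLike.inner_apply, mul_assoc, Complex.re_ofReal_mul, Complex.inner]

/-! ### The coordinate identity -/

lemma lineDeriv_fourier {n : ℕ} (φ : 𝓢(EuclideanSpace ℝ (Fin n), ℂ))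
    (p : EuclideanSpace ℝ (Fin n)) :
    ∂_{p} (𝓕 φ) = (-(2 * π * Complex.I)) • 𝓕 (SchwartzMap.smulLeftCLM ℂ (inner ℝ · p) φ) := by
  rw [SchwartzMap.lineDerivOp_fourier_eq, FourierTransform.fourier_smul]

/-- The contribution of one coordinate `⟪x, p⟫`: on the Fourier side multiplication by it is
`i(2π)⁻¹ ∂_p`, and the three terms combine to a second derivative of `‖𝓕 φ‖²`. -/
lemma setIntegral_theta2 {n : ℕ} (hn : 1 ≤ n) {s : ℝ} (hs : 0 < s)
    (Ω : Set (EuclideanSpace ℝ (Fin n)))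
    (u : EuclideanSpace ℝ (Fin n) → ℝ) (hu : ∀ z, z ∉ Ω → u z = 0)
    (φ : 𝓢(EuclideanSpace ℝ (Fin n), ℂ)) (hφ : ∀ z, φ z = (u z : ℂ))
    (p : EuclideanSpace ℝ (Fin n)) :
    ∫ x in Ω, (1 / 2) * (2 * ⟪x, p⟫ * fracLap s Ω (fun z => ⟪z, p⟫ * u z) x
        - ⟪x, p⟫ ^ 2 * fracLap s Ω u x - fracLap s Ω (fun z => ⟪z, p⟫ ^ 2 * u z) x) * u x
      = (2 * π) ^ (2 * (s - 1)) / 2 *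
        ∫ ξ, ‖ξ‖ ^ (2 * s) * (∂_{p} (∂_{p} (schwartzInner (𝓕 φ) (𝓕 φ)))) ξ := by
  have hlin : (fun x : EuclideanSpace ℝ (Fin n) => ⟪x, p⟫).HasTemperateGrowth := by fun_prop
  set φ₁ := SchwartzMap.smulLeftCLM ℂ (inner ℝ · p) φ with hφ₁
  set φ₂ := SchwartzMap.smulLeftCLM ℂ (inner ℝ · p) φ₁ with hφ₂
  have e₁ (z) : φ₁ z = ((⟪z, p⟫ * u z : ℝ) : ℂ) := by
    rw [hφ₁, SchwartzMap.smulLeftCLM_apply_apply hlin, hφ]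
    simp
  have e₂ (z) : φ₂ z = ((⟪z, p⟫ ^ 2 * u z : ℝ) : ℂ) := by
    rw [hφ₂, SchwartzMap.smulLeftCLM_apply_apply hlin, e₁]
    simp
    ring
  have hind (c : EuclideanSpace ℝ (Fin n) → ℝ) :
      Ω.indicator (fun z => c z * u z) = fun z => c z * u z :=
    Set.indicator_eq_self.2 fun z hz => by
      by_contra hzΩ
      exact hz (by simp [hu z hzΩ])
  have hind0 : Ω.indicator u = u := by simpa using hind 1
  obtain ⟨i11, h11⟩ := integral_fracLap_mul hs Ω (fun z => ⟪z, p⟫ * u z) (fun z => ⟪z, p⟫ * u z)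
    φ₁ φ₁ (by simpa only [hind] using e₁) e₁
  obtain ⟨i02, h02⟩ := integral_fracLap_mul hs Ω u (fun z => ⟪z, p⟫ ^ 2 * u z)
    φ φ₂ (by simpa only [hind0] using hφ) e₂
  obtain ⟨i20, h20⟩ := integral_fracLap_mul hs Ω (fun z => ⟪z, p⟫ ^ 2 * u z) u
    φ₂ φ (by simpa only [hind (fun z => ⟪z, p⟫ ^ 2)] using e₂) hφ
  have hw (A B : 𝓢(EuclideanSpace ℝ (Fin n), ℂ)) :
      Integrable (fun ξ => ‖ξ‖ ^ (2 * s) * ⟪A ξ, B ξ⟫) := by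
    have hn' : (0 : ℝ) < n := by exact_mod_cast hn
    simpa only [schwartzInner_apply] using
      integrable_norm_rpow_mul hn (by linarith : -(n : ℝ) < 2 * s) (schwartzInner A B)
  rw [setIntegral_eq_integral_of_forall_compl_eq_zero fun x hx => by simp [hu x hx]]
  have hsplit : ∫ x, (1 / 2) * (2 * ⟪x, p⟫ * fracLap s Ω (fun z => ⟪z, p⟫ * u z) x
        - ⟪x, p⟫ ^ 2 * fracLap s Ω u x - fracLap s Ω (fun z => ⟪z, p⟫ ^ 2 * u z) x) * u x
      = (∫ x, fracLap s Ω (fun z => ⟪z, p⟫ * u z) x * (⟪x, p⟫ * u x))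
        - (1 / 2) * (∫ x, fracLap s Ω u x * (⟪x, p⟫ ^ 2 * u x))
        - (1 / 2) * (∫ x, fracLap s Ω (fun z => ⟪z, p⟫ ^ 2 * u z) x * u x) := by
    have i : Integrable (fun x => fracLap s Ω (fun z => ⟪z, p⟫ * u z) x * (⟪x, p⟫ * u x)
        - (1 / 2) * (fracLap s Ω u x * (⟪x, p⟫ ^ 2 * u x))) := i11.sub (i02.const_mul _)
    rw [← integral_const_mul, ← integral_const_mul, ← integral_sub i11 (i02.const_mul _),
      ← integral_sub i (i20.const_mul _)]
    congr 1 with x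
    ring
  rw [hsplit, h11, h02, h20]
  have hsq : (2 * π) ^ (2 * s) = (2 * π) ^ (2 * (s - 1)) * (2 * π) ^ 2 := by
    rw [← Real.rpow_natCast, ← Real.rpow_add (by positivity)]
    congr 1
    push_cast
    ring
  have hder (ξ) : (∂_{p} (∂_{p} (schwartzInner (𝓕 φ) (𝓕 φ)))) ξ
      = 2 * (2 * π) ^ 2 * (⟪(𝓕 φ₁) ξ, (𝓕 φ₁) ξ⟫ - (1 / 2) * ⟪(𝓕 φ₂) ξ, (𝓕 φ) ξ⟫
        - (1 / 2) * ⟪(𝓕 φ) ξ, (𝓕 φ₂) ξ⟫) := by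
    rw [lineDeriv_lineDeriv_schwartzInner_self, lineDeriv_fourier, LineDeriv.lineDerivOp_smul,
      lineDeriv_fourier, ← hφ₁, ← hφ₂, smul_smul]
    have hc : (-(2 * π * Complex.I)) * (-(2 * π * Complex.I)) = ((-(2 * π) ^ 2 : ℝ) : ℂ) := by
      push_cast
      linear_combination (2 * π : ℂ) ^ 2 * Complex.I_sq
    rw [hc]
    have hnorm : ‖-(2 * π * Complex.I)‖ = 2 * π := by
      simp [abs_of_pos Real.pi_pos]
    simp only [smul_apply, norm_smul, mul_pow, real_inner_self_eq_norm_sq, hnorm,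
      Complex.coe_smul, real_inner_smul_right]
    have hcomm : ⟪(𝓕 φ₂) ξ, (𝓕 φ) ξ⟫ = ⟪(𝓕 φ) ξ, (𝓕 φ₂) ξ⟫ := real_inner_comm _ _
    rw [hcomm]
    ring
  simp_rw [hder]
  have hcomb : ∫ ξ, ‖ξ‖ ^ (2 * s) * (2 * (2 * π) ^ 2 * (⟪(𝓕 φ₁) ξ, (𝓕 φ₁) ξ⟫
        - (1 / 2) * ⟪(𝓕 φ₂) ξ, (𝓕 φ) ξ⟫ - (1 / 2) * ⟪(𝓕 φ) ξ, (𝓕 φ₂) ξ⟫))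
      = 2 * (2 * π) ^ 2 * ((∫ ξ, ‖ξ‖ ^ (2 * s) * ⟪(𝓕 φ₁) ξ, (𝓕 φ₁) ξ⟫)
        - (1 / 2) * (∫ ξ, ‖ξ‖ ^ (2 * s) * ⟪(𝓕 φ₂) ξ, (𝓕 φ) ξ⟫)
        - (1 / 2) * (∫ ξ, ‖ξ‖ ^ (2 * s) * ⟪(𝓕 φ) ξ, (𝓕 φ₂) ξ⟫)) := by
    have i : Integrable (fun ξ => ‖ξ‖ ^ (2 * s) * ⟪(𝓕 φ₁) ξ, (𝓕 φ₁) ξ⟫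
        - (1 / 2) * (‖ξ‖ ^ (2 * s) * ⟪(𝓕 φ₂) ξ, (𝓕 φ) ξ⟫)) :=
      (hw _ _).sub ((hw _ _).const_mul _)
    rw [← integral_const_mul (1 / 2 : ℝ), ← integral_const_mul (1 / 2 : ℝ),
      ← integral_sub (hw _ _) ((hw _ _).const_mul _),
      ← integral_sub i ((hw _ _).const_mul _),
      ← integral_const_mul]
    congr 1 with ξ
    ring
  rw [hcomb, hsq]
  ring

/-- The paper's Lemma 3.2: for rotated coordinate functions `x̄_i = Σ_k p_{ik} x_k`
(with `P` orthogonal),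
`Σ_i ∫_Ω Θ₂(x̄_i) u₁ dx = s(n+2s−2) ∫_{ℝⁿ} |y|^{2(s−1)} |F[u₁](y)|² dy`. -/
theorem sum_theta2_rotated_coordinates_eq {n : ℕ} (hn : 1 ≤ n) (s : ℝ) (hs : 0 < s)
    (hns : 2 < (n : ℝ) + 2 * s)
    (Ω : Set (EuclideanSpace ℝ (Fin n))) (hΩo : IsOpen Ω) (hΩb : Bornology.IsBounded Ω)
    (P : Matrix (Fin n) (Fin n) ℝ) (hP : P ∈ Matrix.orthogonalGroup (Fin n) ℝ)
    (u₁ : EuclideanSpace ℝ (Fin n) → ℝ)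
    (hus : ContDiff ℝ (⊤ : ℕ∞) u₁) (huc : HasCompactSupport u₁) (huΩ : tsupport u₁ ⊆ Ω) :
    ∑ i : Fin n, ∫ x in Ω,
        (1 / 2) * (2 * (∑ k : Fin n, P i k * x k) *
            fracLap s Ω (fun z => (∑ k : Fin n, P i k * z k) * u₁ z) x
          - (∑ k : Fin n, P i k * x k) ^ 2 * fracLap s Ω u₁ x
          - fracLap s Ω (fun z => (∑ k : Fin n, P i k * z k) ^ 2 * u₁ z) x) * u₁ x
      = s * ((n : ℝ) + 2 * s - 2) *
        ∫ y : EuclideanSpace ℝ (Fin n),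
          ‖y‖ ^ (2 * (s - 1)) * ‖fourierT n (fun z => ((u₁ z : ℝ) : ℂ)) y‖ ^ 2 := by
  -- the rows of `P` form an orthonormal frame
  set p : Fin n → EuclideanSpace ℝ (Fin n) := fun i => WithLp.toLp 2 (P i) with hp
  have hcoord (i : Fin n) (x : EuclideanSpace ℝ (Fin n)) : ∑ k, P i k * x k = ⟪x, p i⟫ := by
    simp [hp, PiLp.inner_apply]
  have hPPt : P * P.transpose = 1 := (Matrix.mem_orthogonalGroup_iff (Fin n) ℝ).1 hP
  have hPtP : P.transpose * P = 1 := (Matrix.mem_orthogonalGroup_iff' (Fin n) ℝ).1 hP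
  have hp1 (i : Fin n) : ‖p i‖ = 1 := by
    have h := congrFun (congrFun hPPt i) i
    rw [Matrix.mul_apply] at h
    simp only [Matrix.transpose_apply, Matrix.one_apply_eq] at h
    have h2 : ‖p i‖ ^ 2 = 1 := by
      rw [EuclideanSpace.norm_sq_eq, ← h]
      simp [hp, sq]
    exact (pow_eq_one_iff_of_nonneg (norm_nonneg _) two_ne_zero).1 h2
  have hp2 (y : EuclideanSpace ℝ (Fin n)) : ∑ i, ⟪p i, y⟫ ^ 2 = ‖y‖ ^ 2 := by
    have h : (P.mulVec y) ⬝ᵥ (P.mulVec y) = (y : Fin n → ℝ) ⬝ᵥ y := by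
      rw [Matrix.dotProduct_mulVec, Matrix.vecMul_mulVec, hPtP, Matrix.vecMul_one]
    rw [EuclideanSpace.norm_sq_eq]
    simp only [real_inner_comm y, ← hcoord]
    simpa [dotProduct, Matrix.mulVec, sq] using h
  have hcs : HasCompactSupport (fun z => (u₁ z : ℂ)) := huc.comp_left Complex.ofReal_zero
  set φ : 𝓢(EuclideanSpace ℝ (Fin n), ℂ) :=
    hcs.toSchwartzMap (Complex.ofRealCLM.contDiff.comp hus) with hφ
  have hφu (z) : φ z = (u₁ z : ℂ) := rfl
  have hu (z) (hz : z ∉ Ω) : u₁ z = 0 := image_eq_zero_of_notMem_tsupport fun h => hz (huΩ h)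
  simp only [hcoord]
  simp_rw [fun i => setIntegral_theta2 hn hs Ω u₁ hu φ hφu (p i)]
  have hi (i : Fin n) : Integrable (fun ξ => ‖ξ‖ ^ (2 * s) *
      (∂_{p i} (∂_{p i} (schwartzInner (𝓕 φ) (𝓕 φ)))) ξ) := by
    have hn' : (0 : ℝ) ≤ n := n.cast_nonneg
    exact integrable_norm_rpow_mul hn (by linarith) _
  rw [← Finset.mul_sum, ← integral_finsetSum _ fun i _ => hi i]
  simp_rw [← Finset.mul_sum]
  rw [integral_norm_rpow_mul_laplacian hn hns p hp1 hp2, integral_norm_rpow_mul_fourierT_sq]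
  simp only [schwartzInner_apply, real_inner_self_eq_norm_sq, SchwartzMap.fourier_coe]
  change _ = s * (n + 2 * s - 2) *
    ((2 * π) ^ (2 * (s - 1)) * ∫ ξ, ‖ξ‖ ^ (2 * (s - 1)) * ‖𝓕 (φ : _ → ℂ) ξ‖ ^ 2)
  ring
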